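/- Let A be a finite alphabet, σ : A* → A* a primitive substitution, and x an infinite word over A that is an aperiodic fixed point of σ. Then x is linearly recurrent: there exists a constant K such that x is uniformly recurrent and for every factor u of x and every return w to u in x one has |w| ≤ K|u|. -/

import Mathlib

/-- The factor of the infinite word `x` of length `n` starting at position `i`,
i.e. the word `x_i x_{i+1} ⋯ x_{i+n-1}`. -/
def seg {A : Type*} (x : ℕ → A) (i n : ℕ) : List A :=
  (List.range n).map fun k => x (i + k)

/-- `u` is a (nonempty, finite) factor of the infinite word `x`. -/
def IsFactor {A : Type*} (x : ℕ → A) (u : List A) : Prop :=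
  u ≠ [] ∧ ∃ i, u = seg x i u.length

/-- `u` is a (finite) prefix of the infinite word `x`. -/
def IsPrefixOf {A : Type*} (x : ℕ → A) (u : List A) : Prop :=
  u = seg x 0 u.length

/-- The finite word `u` occurs in the finite word `v` at position `i`. -/
def OccursAt {A : Type*} (u v : List A) (i : ℕ) : Prop :=
  i + u.length ≤ v.length ∧ (v.drop i).take u.length = u

/-- `w` is a return word to `u` in `x`: `w` is nonempty, `w ++ u` is a factor of
`x`, and `u` occurs exactly twice in `w ++ u`. -/
def IsReturn {A : Type*} (x : ℕ → A) (u w : List A) : Prop :=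
  w ≠ [] ∧ IsFactor x (w ++ u) ∧ {i | OccursAt u (w ++ u) i}.ncard = 2

/-- The set of return words to `u` in `x`. -/
def Ret {A : Type*} (x : ℕ → A) (u : List A) : Set (List A) :=
  {w | IsReturn x u w}

/-- `x` is uniformly recurrent: every factor has a nonempty and finite set of
return words. -/
def UniformlyRecurrent {A : Type*} (x : ℕ → A) : Prop :=
  ∀ u, IsFactor x u → (Ret x u).Nonempty ∧ (Ret x u).Finite

/-- `x` is aperiodic: there is no `n ≥ 1` with `x (i + n) = x i` for all `i`. -/
def Aperiodic {A : Type*} (x : ℕ → A) : Prop :=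
  ¬ ∃ n : ℕ, 1 ≤ n ∧ ∀ i : ℕ, x (i + n) = x i

/-- Apply a substitution (given by its action `σ` on letters) to a finite word. -/
def substApply {A : Type*} (σ : A → List A) (w : List A) : List A :=
  (w.map σ).flatten

/-- `σ^n` applied to a letter. -/
def substIter {A : Type*} (σ : A → List A) : ℕ → A → List A
  | 0, a => [a]
  | n + 1, a => substApply σ (substIter σ n a)

/-- The substitution `σ` is primitive: some power `σ^n` maps every letter to a word
containing every letter. -/
def Primitive {A : Type*} (σ : A → List A) : Prop :=
  ∃ n : ℕ, ∀ a b : A, a ∈ substIter σ n b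

/-- The infinite word `x` is a fixed point of the substitution `σ`: applying `σ`
letterwise to `x` and concatenating gives back `x`, i.e. the image of every finite
prefix of `x` is again a prefix of `x`. -/
def IsFixedPoint {A : Type*} (σ : A → List A) (x : ℕ → A) : Prop :=
  ∀ n : ℕ, IsPrefixOf x (substApply σ (seg x 0 n))

section helpers
variable {A : Type*}

lemma seg_length (x : ℕ → A) (i n : ℕ) : (seg x i n).length = n := by simp [seg]

lemma seg_add (x : ℕ → A) (i m n : ℕ) : seg x i (m + n) = seg x i m ++ seg x (i + m) n := by
  simp [seg, List.range_add, Function.comp_def, add_assoc]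

lemma seg_one (x : ℕ → A) (i : ℕ) : seg x i 1 = [x i] := by simp [seg]

lemma mem_seg {x : ℕ → A} {i n : ℕ} {a : A} :
    a ∈ seg x i n ↔ ∃ r, i ≤ r ∧ r < i + n ∧ x r = a := by
  simp only [seg, List.mem_map, List.mem_range]
  constructor
  · rintro ⟨k, hk, h⟩
    exact ⟨i + k, by omega, by omega, h⟩
  · rintro ⟨r, h1, h2, h⟩
    exact ⟨r - i, by omega, by rw [← h]; congr 1; omega⟩

lemma seg_eq_iff {x : ℕ → A} {i j n : ℕ} :
    seg x i n = seg x j n ↔ ∀ k < n, x (i + k) = x (j + k) := by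
  simp [seg]

lemma seg_drop_take (x : ℕ → A) (i n k m : ℕ) (h : k + m ≤ n) :
    ((seg x i n).drop k).take m = seg x (i + k) m := by
  obtain ⟨r, rfl⟩ := Nat.exists_eq_add_of_le h
  rw [seg_add, seg_add, List.append_assoc, List.drop_left' (seg_length _ _ _),
    List.take_left' (seg_length _ _ _)]

lemma substApply_append (σ : A → List A) (v w : List A) :
    substApply σ (v ++ w) = substApply σ v ++ substApply σ w := by simp [substApply]

/-- `P` sends equal factors to equal factors of equal length. -/
def GoodMap (x : ℕ → A) (P : ℕ → ℕ) : Prop :=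
  ∀ i j m, seg x i m = seg x j m →
    ∃ d, P (i + m) = P i + d ∧ P (j + m) = P j + d ∧ seg x (P i) d = seg x (P j) d

lemma GoodMap.iterate {x : ℕ → A} {p : ℕ → ℕ} (hp : GoodMap x p) (n : ℕ) :
    GoodMap x (p^[n]) := by
  induction n with
  | zero => intro i j m h; exact ⟨m, rfl, rfl, h⟩
  | succ n ih =>
    intro i j m h
    obtain ⟨d, h1, h2, h3⟩ := ih i j m h
    obtain ⟨e, g1, g2, g3⟩ := hp _ _ _ h3
    simp only [Function.iterate_succ_apply']
    exact ⟨e, by rw [h1, g1], by rw [h2, g2], g3⟩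

/-- cut points -/
def cutPt (σ : A → List A) (x : ℕ → A) (i : ℕ) : ℕ := (substApply σ (seg x 0 i)).length

lemma cut_spec {σ : A → List A} {x : ℕ → A} (hfix : IsFixedPoint σ x) (i m : ℕ) :
    ∃ d, cutPt σ x (i + m) = cutPt σ x i + d ∧
      seg x (cutPt σ x i) d = substApply σ (seg x i m) := by
  have h1 := hfix (i + m)
  have h2 := hfix i
  unfold IsPrefixOf at h1 h2
  have h3 : substApply σ (seg x 0 (i + m)) =
      substApply σ (seg x 0 i) ++ substApply σ (seg x i m) := by
    rw [seg_add, substApply_append, zero_add]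
  refine ⟨(substApply σ (seg x i m)).length, ?_, ?_⟩
  · simp [cutPt, h3]
  · rw [h3, List.length_append, seg_add, zero_add] at h1
    exact (List.append_inj h1 (by rw [seg_length])).2.symm

lemma cut_good {σ : A → List A} {x : ℕ → A} (hfix : IsFixedPoint σ x) :
    GoodMap x (cutPt σ x) := by
  intro i j m h
  obtain ⟨d, h1, h2⟩ := cut_spec hfix i m
  obtain ⟨e, g1, g2⟩ := cut_spec hfix j m
  have : d = e := by
    have := congrArg List.length (h2.trans ((congrArg _ h).trans g2.symm))
    simpa [seg_length] using this
  subst this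
  exact ⟨d, h1, g1, by rw [h2, g2, h]⟩

lemma cut_iter {σ : A → List A} {x : ℕ → A} (hfix : IsFixedPoint σ x) (n i : ℕ) :
    ∃ d, (cutPt σ x)^[n] (i + 1) = (cutPt σ x)^[n] i + d ∧
      seg x ((cutPt σ x)^[n] i) d = substIter σ n (x i) := by
  induction n with
  | zero => exact ⟨1, rfl, seg_one _ _⟩
  | succ n ih =>
    obtain ⟨d, h1, h2⟩ := ih
    obtain ⟨e, g1, g2⟩ := cut_spec hfix ((cutPt σ x)^[n] i) d
    simp only [Function.iterate_succ_apply']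
    exact ⟨e, by rw [h1, g1], by rw [g2, h2, substIter]⟩

lemma sum_upper {P : ℕ → ℕ} {B : ℕ} (h : ∀ i, P (i + 1) ≤ P i + B) (i m : ℕ) :
    P (i + m) ≤ P i + m * B := by
  induction m with
  | zero => simp
  | succ m ih => have := h (i + m); rw [← add_assoc]; linarith

lemma sum_lower {P : ℕ → ℕ} {B : ℕ} (h : ∀ i, P i + B ≤ P (i + 1)) (i m : ℕ) :
    P i + m * B ≤ P (i + m) := by
  induction m with
  | zero => simp
  | succ m ih => have := h (i + m); rw [← add_assoc]; linarith

lemma find_cut {P : ℕ → ℕ} (h0 : P 0 = 0) (h : StrictMono P) (q : ℕ) :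
    ∃ t, P t ≤ q ∧ q < P (t + 1) := by
  induction q with
  | zero => exact ⟨0, by omega, by have := h (Nat.lt_succ_self 0); simp at this ⊢; omega⟩
  | succ q ih =>
    obtain ⟨t, h1, h2⟩ := ih
    by_cases hq : q + 1 < P (t + 1)
    · exact ⟨t, by omega, hq⟩
    · exact ⟨t + 1, by omega, by have := h (Nat.lt_succ_self (t + 1)); simp at this; omega⟩

/-- transfer of bounded gaps along a good map -/
lemma transfer {x : ℕ → A} {P : ℕ → ℕ} (hP : GoodMap x P) (h0 : P 0 = 0) (hm : StrictMono P)
    {B L j l : ℕ} (hB : ∀ i, P (i + 1) ≤ P i + B)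
    (hL : ∀ t, ∃ j', t ≤ j' ∧ j' < t + L ∧ seg x j' l = seg x j l)
    {i m : ℕ} (hi : P j ≤ i) (hi2 : i + m ≤ P (j + l)) (q : ℕ) :
    ∃ q', q ≤ q' ∧ q' < q + (L + l + 1) * B + 1 ∧ seg x q' m = seg x i m := by
  obtain ⟨t, ht1, ht2⟩ := find_cut h0 hm q
  obtain ⟨j', hj1, hj2, hj3⟩ := hL (t + 1)
  obtain ⟨d, h1, h2, h3⟩ := hP _ _ _ hj3
  refine ⟨P j' + (i - P j), ?_, ?_, ?_⟩
  · have := hm.monotone hj1; omega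
  · have a1 := sum_upper hB t (j' - t)
    have a2 := sum_upper hB j l
    have a3 : t + (j' - t) = j' := by omega
    rw [a3] at a1
    have a4 : (j' - t) * B ≤ (L + 1) * B := Nat.mul_le_mul_right _ (by omega)
    have a5 : (L + l + 1) * B = (L + 1) * B + l * B := by ring
    omega
  · rw [seg_eq_iff] at h3 ⊢
    intro k hk
    have := h3 (i - P j + k) (by omega)
    rw [← add_assoc] at this
    rw [this]
    congr 1
    omega

lemma core [Finite A] {x : ℕ → A} {p : ℕ → ℕ} (hp : GoodMap x p) (h0 : p 0 = 0) {C : ℕ}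
    (hC : ∀ i, p (i + 1) ≤ p i + C)
    (hall : ∀ a i, ∃ r, p i ≤ r ∧ r < p (i + 1) ∧ x r = a)
    (hne : ∃ a b : A, a ≠ b) :
    ∃ K, ∀ i m, 1 ≤ m → ∀ q, ∃ q', q ≤ q' ∧ q' < q + K * m ∧ seg x q' m = seg x i m := by
  have h2 : ∀ i, p i + 2 ≤ p (i + 1) := by
    intro i
    obtain ⟨a, b, hab⟩ := hne
    obtain ⟨r, r1, r2, r3⟩ := hall a i
    obtain ⟨s, s1, s2, s3⟩ := hall b i
    have : r ≠ s := by rintro rfl; exact hab (r3.symm.trans s3)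
    omega
  have hpm : StrictMono p := strictMono_nat_of_lt_succ fun i => by have := h2 i; omega
  have hm : ∀ n, StrictMono (p^[n]) := fun n => hpm.iterate n
  have h00 : ∀ n, p^[n] 0 = 0 := fun n => Function.iterate_fixed h0 n
  have hg : ∀ n, GoodMap x (p^[n]) := hp.iterate
  have hC1 : 1 ≤ C := by have := h2 0; have := hC 0; omega
  -- growth
  have hgrow : ∀ n i, p^[n] i + (n + 1) ≤ p^[n] (i + 1) := by
    intro n
    induction n with
    | zero => intro i; simp
    | succ n ih =>
      intro i
      have a := sum_lower ih (p i) 2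
      have b := (hm n).monotone (h2 i)
      simp only [Function.iterate_succ_apply]
      omega
  -- each level n gap at i is below each level n+1 gap at j
  have hgap : ∀ n i j, p^[n] (i + 1) + p^[n+1] j ≤ p^[n] i + p^[n+1] (j + 1) := by
    intro n i j
    obtain ⟨r, r1, r2, r3⟩ := hall (x i) j
    obtain ⟨d, d1, d2, -⟩ := hg n r i 1 (by rw [seg_one, seg_one, r3])
    have a := (hm n).monotone r1
    have b := (hm n).monotone (show r + 1 ≤ p (j + 1) by omega)
    simp only [Function.iterate_succ_apply]
    omega
  have hup : ∀ n B, (∀ i, p^[n] (i + 1) ≤ p^[n] i + B) → ∀ i,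
      p^[n+1] (i + 1) ≤ p^[n+1] i + C * B := by
    intro n B h i
    have a := (hm n).monotone (hC i)
    have b := sum_upper h (p i) C
    simp only [Function.iterate_succ_apply]
    omega
  have hcmp : ∀ n i j, p^[n] (i + 1) ≤ p^[n] i + C * (p^[n] (j + 1) - p^[n] j) := by
    intro n i j
    cases n with
    | zero => simp; omega
    | succ n =>
      exact hup n _ (fun k => by have := hgap n k j; omega) i
  have hscale : ∀ m, 1 ≤ m → ∃ n, (∀ i, p^[n] i + m ≤ p^[n] (i + 1)) ∧
      ∀ i, p^[n] (i + 1) ≤ p^[n] i + (C * C * C + 1) * m := by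
    intro m hm1
    have hex : ∃ n, C * m ≤ p^[n] 1 := ⟨C * m, by have := hgrow (C * m) 0; simp at this; omega⟩
    classical
    refine ⟨Nat.find hex, fun i => ?_, fun i => ?_⟩
    · have a := Nat.find_spec hex
      have b := hcmp (Nat.find hex) 0 i
      rw [h00, zero_add, zero_add] at b
      have c := Nat.le_of_mul_le_mul_left (a.trans b) hC1
      have := (hm (Nat.find hex)).monotone (Nat.le_succ i)
      simp only [Nat.succ_eq_add_one] at this
      omega
    · rcases hn : Nat.find hex with _ | k
      · have : 0 < (C * C * C + 1) * m := Nat.mul_pos (Nat.succ_pos _) hm1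
        simp only [Function.iterate_zero, id]; omega
      · have a : p^[k] 1 < C * m := not_le.mp (Nat.find_min hex (by omega))
        have b : ∀ i, p^[k] (i + 1) ≤ p^[k] i + C * (C * m) := by
          intro i
          have b := hcmp k i 0
          rw [h00, zero_add] at b
          have : C * (p^[k] 1 - 0) ≤ C * (C * m) := Nat.mul_le_mul_left _ (by omega)
          omega
        have c := hup k _ b i
        have : (C * C * C + 1) * m = C * (C * (C * m)) + m := by ring
        omega
  -- recurrence of the first letter
  have hfirst : ∀ t, ∃ j', t ≤ j' ∧ j' < t + 2 * C ∧ seg x j' 1 = seg x 0 1 := by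
    intro t
    obtain ⟨s, s1, s2⟩ := find_cut h0 hpm t
    obtain ⟨r, r1, r2, r3⟩ := hall (x 0) (s + 1)
    have := hC s
    have := hC (s + 1)
    exact ⟨r, by omega, by omega, by rw [seg_one, seg_one, r3]⟩
  -- recurrence of pairs
  have hpair1 : ∀ j, ∃ L, ∀ t, ∃ j', t ≤ j' ∧ j' < t + L ∧ seg x j' 2 = seg x j 2 := by
    intro j
    have hb : ∀ i, p^[j+2] (i + 1) ≤ p^[j+2] i + C * (p^[j+2] (0 + 1) - p^[j+2] 0) :=
      fun i => hcmp _ i 0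
    refine ⟨(2 * C + 1 + 1) * (C * (p^[j+2] (0 + 1) - p^[j+2] 0)) + 1, fun t => ?_⟩
    exact transfer (hg (j + 2)) (h00 _) (hm _) hb hfirst (by rw [h00]; omega)
      (by have := hgrow (j + 2) 0; omega) t
  have hpair : ∃ L, ∀ j t, ∃ j', t ≤ j' ∧ j' < t + L ∧ seg x j' 2 = seg x j 2 := by
    choose f hf using hpair1
    have hfin : (Set.range fun j => seg x j 2).Finite :=
      (List.finite_length_eq A 2).subset (by rintro _ ⟨j, rfl⟩; exact seg_length _ _ _)
    -- choose a representative for each pair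
    let rep : Set.range (fun j => seg x j 2) → ℕ := fun s => s.2.choose
    have hrep : ∀ s, seg x (rep s) 2 = s.1 := fun s => s.2.choose_spec
    haveI := hfin.to_subtype
    obtain ⟨L, hL⟩ := (Set.finite_range fun s => f (rep s)).bddAbove
    refine ⟨L, fun j t => ?_⟩
    obtain ⟨j', a, b, c⟩ := hf (rep ⟨seg x j 2, j, rfl⟩) t
    have : f (rep ⟨seg x j 2, j, rfl⟩) ≤ L := hL ⟨_, rfl⟩
    exact ⟨j', a, by omega, c.trans (hrep _)⟩
  obtain ⟨L, hL⟩ := hpair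
  refine ⟨(L + 2 + 1) * (C * C * C + 1) + 1, fun i m hm1 q => ?_⟩
  obtain ⟨n, hlo, hhi⟩ := hscale m hm1
  obtain ⟨j, j1, j2⟩ := find_cut (h00 n) (hm n) i
  obtain ⟨q', a, b, c⟩ := transfer (hg n) (h00 n) (hm n) hhi (hL j) j1 (m := m)
    (by have := hlo (j + 1); rw [show j + 1 + 1 = j + 2 from rfl] at this; omega) q
  refine ⟨q', a, ?_, c⟩
  have : ((L + 2 + 1) * (C * C * C + 1) + 1) * m
    = (L + 2 + 1) * ((C * C * C + 1) * m) + m := by ring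
  omega

end helpers

/-- If `x` is an aperiodic fixed point of a primitive substitution over
a finite alphabet, then `x` is linearly recurrent: `x` is uniformly recurrent and there
is a constant `K` such that every return word `w` to any factor `u` of `x` satisfies
`|w| ≤ K·|u|`. -/
theorem stmt15 {A : Type*} [Fintype A] (σ : A → List A) (hσ : ∀ a, σ a ≠ [])
    (hprim : Primitive σ) (x : ℕ → A) (hfix : IsFixedPoint σ x) (hAp : Aperiodic x) :
    ∃ K : ℕ, UniformlyRecurrent x ∧
      ∀ u, IsFactor x u → ∀ w ∈ Ret x u, w.length ≤ K * u.length := by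
    classical
  have hrec : ∃ K, ∀ i m, 1 ≤ m → ∀ q, ∃ q', q ≤ q' ∧ q' < q + K * m ∧
      seg x q' m = seg x i m := by
    obtain ⟨N, hN⟩ := hprim
    refine core (p := (cutPt σ x)^[N]) ((cut_good hfix).iterate N)
      (Function.iterate_fixed (by simp [cutPt, substApply, seg]) N)
      (C := Finset.univ.sup fun a => (substIter σ N a).length) ?_ ?_ ?_
    · intro i
      obtain ⟨d, h1, h2⟩ := cut_iter hfix N i
      have : d = (substIter σ N (x i)).length := by rw [← h2, seg_length]
      rw [h1, this]
      exact Nat.add_le_add_left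
        (Finset.le_sup (f := fun a => (substIter σ N a).length) (Finset.mem_univ (x i))) _
    · intro a i
      obtain ⟨d, h1, h2⟩ := cut_iter hfix N i
      rw [h1]
      exact mem_seg.1 (h2 ▸ hN a (x i))
    · by_contra hcon
      push Not at hcon
      exact hAp ⟨1, le_rfl, fun i => hcon _ _⟩
  obtain ⟨K, hK⟩ := hrec
  have hocc : ∀ (u : List A) (i n k : ℕ), OccursAt u (seg x i n) k ↔
      k + u.length ≤ n ∧ seg x (i + k) u.length = u := by
    intro u i n k
    unfold OccursAt
    rw [seg_length]
    constructor
    · rintro ⟨a, b⟩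
      exact ⟨a, by rwa [seg_drop_take _ _ _ _ _ a] at b⟩
    · rintro ⟨a, b⟩
      exact ⟨a, by rwa [seg_drop_take _ _ _ _ _ a]⟩
  have hbound : ∀ u, IsFactor x u → ∀ w ∈ Ret x u, w.length ≤ (2 * K) * u.length := by
    rintro u ⟨hu, i0, hi0⟩ w ⟨hw, ⟨-, i, hi⟩, hcard⟩
    by_contra hlt
    push Not at hlt
    have hm : 1 ≤ u.length := List.length_pos_iff.2 hu
    rw [hi] at hcard
    simp only [hocc, List.length_append] at hcard
    obtain ⟨a, a1, a2, a3⟩ := hK i0 u.length hm i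
    obtain ⟨b, b1, b2, b3⟩ := hK i0 u.length hm (i + K * u.length)
    have hlast : seg x (i + w.length) u.length = u := by
      rw [List.length_append, seg_add] at hi
      exact (List.append_inj hi (by rw [seg_length])).2.symm
    have hmul : 2 * K * u.length = K * u.length + K * u.length := by ring
    have hsub : ({a - i, b - i, w.length} : Finset ℕ) ⊆ ((Finset.range (w.length + 1)).filter
        fun k => k + u.length ≤ w.length + u.length ∧ seg x (i + k) u.length = u) := by
      intro k hk
      simp only [Finset.mem_insert, Finset.mem_singleton] at hk
      simp only [Finset.mem_filter, Finset.mem_range]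
      rcases hk with rfl | rfl | rfl
      · refine ⟨by omega, by omega, ?_⟩
        rw [show i + (a - i) = a by omega, a3, ← hi0]
      · refine ⟨by omega, by omega, ?_⟩
        rw [show i + (b - i) = b by omega, b3, ← hi0]
      · exact ⟨by omega, by omega, hlast⟩
    have hc := Finset.card_le_card hsub
    rw [Finset.card_eq_three.2 ⟨a - i, b - i, w.length, by omega, by omega, by omega, rfl⟩,
      ← Set.ncard_coe_finset] at hc
    have heq : (((Finset.range (w.length + 1)).filter
        fun k => k + u.length ≤ w.length + u.length ∧ seg x (i + k) u.length = u) : Set ℕ)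
        = {k | k + u.length ≤ w.length + u.length ∧ seg x (i + k) u.length = u} := by
      ext k
      simp only [Finset.coe_filter, Finset.mem_range, Set.mem_setOf_eq]
      constructor
      · exact fun h => h.2
      · exact fun h => ⟨by omega, h⟩
    rw [heq, hcard] at hc
    omega
  refine ⟨2 * K, fun u hu => ⟨?_, ?_⟩, hbound⟩
  · obtain ⟨hu0, i, hi⟩ := hu
    have hm : 1 ≤ u.length := List.length_pos_iff.2 hu0
    have hex : ∃ d, 1 ≤ d ∧ seg x (i + d) u.length = u := by
      obtain ⟨a, a1, a2, a3⟩ := hK i u.length hm (i + 1)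
      exact ⟨a - i, by omega, by rw [show i + (a - i) = a by omega, a3, ← hi]⟩
    obtain ⟨d1, d2⟩ := Nat.find_spec hex
    have hmin : ∀ k, 1 ≤ k → k < Nat.find hex → seg x (i + k) u.length ≠ u :=
      fun k hk1 hk2 hk => Nat.find_min hex hk2 ⟨hk1, hk⟩
    generalize Nat.find hex = d at d1 d2 hmin
    have happ : seg x i d ++ u = seg x i (d + u.length) := by
      rw [seg_add, d2]
    refine ⟨seg x i d, ?_, ⟨by simp [hu0], i, ?_⟩, ?_⟩
    · intro h
      have := congrArg List.length h
      rw [seg_length] at this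
      simp at this
      omega
    · rw [happ, seg_length]
    · rw [happ]
      simp only [hocc]
      have : {k | k + u.length ≤ d + u.length ∧ seg x (i + k) u.length = u} = {0, d} := by
        ext k
        simp only [Set.mem_setOf_eq, Set.mem_insert_iff, Set.mem_singleton_iff]
        constructor
        · rintro ⟨h1, h2⟩
          by_contra hcon
          push Not at hcon
          exact hmin k (by omega) (by omega) h2
        · rintro (rfl | rfl)
          · exact ⟨by omega, hi.symm⟩
          · exact ⟨le_rfl, d2⟩
      rw [this]
      exact Set.ncard_pair (by omega)
  · exact (List.finite_length_le A (2 * K * u.length)).subset fun w hw => hbound u hu w hw
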